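/- There exist d ∈ ℕ and a Borel probability measure μ on ℝ^d with por(μ) > 0 such that μ(E) = 0 for every Borel set E ⊆ ℝ^d that is mean (α,ρ)-porous for some α > 0 and ρ > 0. -/

import Mathlib

open MeasureTheory Filter Metric Set
open scoped Classical

/-- `por(μ,x,r,ε)`: the supremum of `α ≥ 0` such that some ball `B(y,αr) ⊆ B(x,r)` has
`μ(B(y,αr)) ≤ ε·μ(B(x,r))` (an "ε-hole" of relative size `α`). -/
noncomputable def porMeas {X : Type*} [MetricSpace X] [MeasurableSpace X]
    (μ : Measure X) (x : X) (r ε : ℝ) : ℝ :=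
  sSup {α : ℝ | 0 ≤ α ∧ ∃ y, Metric.ball y (α * r) ⊆ Metric.ball x r ∧
    μ (Metric.ball y (α * r)) ≤ ENNReal.ofReal ε * μ (Metric.ball x r)}

/-- `por(μ,x,ε) = liminf_{r→0} por(μ,x,r,ε)`. -/
noncomputable def porMeasPt {X : Type*} [MetricSpace X] [MeasurableSpace X]
    (μ : Measure X) (x : X) (ε : ℝ) : ℝ :=
  Filter.liminf (fun r : ℝ => porMeas μ x r ε) (nhdsWithin 0 (Set.Ioi 0))

/-- `por(μ,ε)`: the `μ`-essential infimum of `x ↦ por(μ,x,ε)`. -/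
noncomputable def porMeasEps {X : Type*} [MetricSpace X] [MeasurableSpace X]
    (μ : Measure X) (ε : ℝ) : ℝ :=
  essInf (fun x => porMeasPt μ x ε) μ

/-- `por(μ) = lim_{ε→0⁺} por(μ,ε)`; since `ε ↦ por(μ,ε)` is nondecreasing, this limit is
the infimum of `por(μ,ε)` over `ε > 0`. -/
noncomputable def porMeasure {X : Type*} [MetricSpace X] [MeasurableSpace X]
    (μ : Measure X) : ℝ :=
  sInf ((fun ε => porMeasEps μ ε) '' Set.Ioi 0)
/-- `por(E,x,r)`: the supremum of `α ≥ 0` such that some ball `B(y,αr)` is contained in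
`B(x,r) \ E`. -/
noncomputable def porSet {X : Type*} [MetricSpace X] (E : Set X) (x : X) (r : ℝ) : ℝ :=
  sSup {α : ℝ | 0 ≤ α ∧ ∃ y, Metric.ball y (α * r) ⊆ Metric.ball x r \ E}

/-- `por(E,x) = liminf_{r→0} por(E,x,r)`. -/
noncomputable def porSetPt {X : Type*} [MetricSpace X] (E : Set X) (x : X) : ℝ :=
  Filter.liminf (fun r : ℝ => porSet E x r) (nhdsWithin 0 (Set.Ioi 0))

/-- `por(E) = inf_{x ∈ E} por(E,x)`. -/
noncomputable def porSetTotal {X : Type*} [MetricSpace X] (E : Set X) : ℝ :=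
  sInf ((fun x => porSetPt E x) '' E)

/-- `E` is mean `(α,ρ)`-porous: at every point of `E` the lower asymptotic proportion of
scales `i` with `por(E,x,2^{-i}) ≥ α` is at least `ρ`. -/
def IsMeanPorousSet {X : Type*} [MetricSpace X] (E : Set X) (α ρ : ℝ) : Prop :=
  ∀ x ∈ E,
    ρ ≤ Filter.liminf (fun n : ℕ =>
      (((Finset.range n).filter fun i => α ≤ porSet E x ((2 : ℝ) ^ (-(i : ℤ)))).card : ℝ) / n)
      Filter.atTop

/-!
Let `μ` be the law of a random number in `[0, 1]` whose base `4` digits are independent, the `n`-th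
digit being `1` with probability tending to `1` while each of the four digits keeps probability at
least a constant times `1 / log n`.

Inside a `4`-adic interval of level `n`, the subinterval on which the next digit is `0` has relative
measure tending to `0`. Hence `μ` has `ε`-holes of a fixed relative size at every small scale, for
every `ε > 0`, and `por(μ) > 0`.

Let now `E` be mean porous. For almost every point of `E` almost all digits are `1`, so that the
point stays well inside its `4`-adic interval. At such a level `n`, porosity of `E` provides a
subinterval of level `n + k` which misses `E` although its ancestor of level `n` meets `E`; here `k`
depends only on `α`. A point lies in at most `k` of these holes, since no interval inside a hole
meets `E`, whereas a hole has conditional measure at least `δ ^ k` with `δ` comparable to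
`1 / log n`. So the expected number of porous levels below `N` is at most of order `k (log N) ^ k`,
which is `o(N)`. By Markov's inequality the lower density of the porous levels is almost surely `0`,
and almost no point belongs to `E`.
-/

open PiNat (cylinder)
open scoped Topology

section Digits

variable {b : ℕ} {ω η : ℕ → Fin b} {n : ℕ}

/-- The number with digits `ω 0, …, ω (n - 1)` in base `b`, that is, the left endpoint of the
`b`-adic interval of length `b⁻ⁿ` formed by the numbers whose first `n` digits are those of `ω`. -/
noncomputable def truncDigits (ω : ℕ → Fin b) (n : ℕ) : ℝ :=
  ∑ i ∈ Finset.range n, Real.ofDigitsTerm ω i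

lemma truncDigits_succ (ω : ℕ → Fin b) (n : ℕ) :
    truncDigits ω (n + 1) = truncDigits ω n + ω n * ((b : ℝ) ^ (n + 1))⁻¹ :=
  Finset.sum_range_succ ..

lemma truncDigits_eq_of_mem_cylinder (h : η ∈ cylinder ω n) :
    truncDigits η n = truncDigits ω n :=
  Finset.sum_congr rfl fun i hi => by simp only [Real.ofDigitsTerm, h i (Finset.mem_range.1 hi)]

lemma inv_pow_eq_mul_inv_pow_succ (hb : b ≠ 0) (n : ℕ) :
    ((b : ℝ) ^ n)⁻¹ = b * ((b : ℝ) ^ (n + 1))⁻¹ := by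
  rw [pow_succ]
  field_simp

lemma ofDigits_mem_Icc_truncDigits (ω : ℕ → Fin b) (n : ℕ) :
    Real.ofDigits ω ∈ Icc (truncDigits ω n) (truncDigits ω n + ((b : ℝ) ^ n)⁻¹) := by
  have htail₀ := Real.ofDigits_nonneg fun i => ω (i + n)
  have htail₁ := Real.ofDigits_le_one fun i => ω (i + n)
  rw [Real.ofDigits_eq_sum_add_ofDigits ω n]
  exact ⟨le_add_of_nonneg_right (by positivity),
    add_le_add_right (mul_le_of_le_one_right (by positivity) htail₁) _⟩

lemma Icc_truncDigits_subset_image_cylinder (hb : 1 < b) (ω : ℕ → Fin b) (n : ℕ) :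
    Icc (truncDigits ω n) (truncDigits ω n + ((b : ℝ) ^ n)⁻¹) ⊆ Real.ofDigits '' cylinder ω n := by
  intro x hx
  have hpow : (0 : ℝ) < (b : ℝ) ^ n := by positivity
  have htail : (b : ℝ) ^ n * (x - truncDigits ω n) ∈ Icc (0 : ℝ) 1 :=
    ⟨mul_nonneg hpow.le (sub_nonneg.2 hx.1),
      (le_inv_mul_iff₀ hpow).1 (by linarith [hx.2])⟩
  obtain ⟨τ, -, hτ⟩ := Real.ofDigits_SurjOn hb htail
  let ξ : ℕ → Fin b := fun i => if i < n then ω i else τ (i - n)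
  have hξ : ξ ∈ cylinder ω n := fun i hi => if_pos hi
  have hξτ : (fun i => ξ (i + n)) = τ := by funext i; simp [ξ]
  refine ⟨ξ, hξ, ?_⟩
  rw [Real.ofDigits_eq_sum_add_ofDigits ξ n, hξτ, hτ, inv_mul_cancel_left₀ hpow.ne']
  change truncDigits ξ n + _ = x
  rw [truncDigits_eq_of_mem_cylinder hξ]
  ring

lemma Ioo_truncDigits_succ_subset (ω : ℕ → Fin b) (n : ℕ) :
    Ioo (truncDigits ω (n + 1)) (truncDigits ω (n + 1) + ((b : ℝ) ^ (n + 1))⁻¹) ⊆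
      Ioo (truncDigits ω n) (truncDigits ω n + ((b : ℝ) ^ n)⁻¹) := by
  have hdigit : ((ω n : ℕ) : ℝ) + 1 ≤ b := mod_cast (ω n).isLt
  have hpos : (0 : ℝ) ≤ ((b : ℝ) ^ (n + 1))⁻¹ := by positivity
  refine Ioo_subset_Ioo ?_ ?_ <;> rw [truncDigits_succ]
  · exact le_add_of_nonneg_right (by positivity)
  · rw [inv_pow_eq_mul_inv_pow_succ (ω 0).pos.ne' n]
    linarith [mul_le_mul_of_nonneg_right hdigit hpos]

lemma mem_cylinder_of_ofDigits_mem_Ioo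
    (h : Real.ofDigits η ∈ Ioo (truncDigits ω n) (truncDigits ω n + ((b : ℝ) ^ n)⁻¹)) :
    η ∈ cylinder ω n := by
  induction n with
  | zero => simp
  | succ n ih =>
    have hpre : η ∈ cylinder ω n := ih (Ioo_truncDigits_succ_subset ω n h)
    have hη := ofDigits_mem_Icc_truncDigits η (n + 1)
    have hpos : 0 < ((b : ℝ) ^ (n + 1))⁻¹ := by
      have := (ω 0).pos
      positivity
    rw [truncDigits_succ] at h hη
    rw [truncDigits_eq_of_mem_cylinder hpre] at hη
    have hlt : ((ω n : ℕ) : ℝ) < (η n : ℕ) + 1 := lt_of_mul_lt_mul_right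
      (by linarith [h.1, hη.2]) hpos.le
    have hgt : ((η n : ℕ) : ℝ) < (ω n : ℕ) + 1 := lt_of_mul_lt_mul_right
      (by linarith [h.2, hη.1]) hpos.le
    have hdigit : η n = ω n := Fin.ext (by norm_cast at hlt hgt; omega)
    intro i hi
    rcases Nat.lt_succ_iff_lt_or_eq.1 hi with hi | rfl
    exacts [hpre i hi, hdigit]

lemma ball_ofDigits_subset_image_cylinder (h₀ : 0 < (ω n : ℕ)) (h₁ : (ω n : ℕ) + 1 < b) :
    ball (Real.ofDigits ω) ((b : ℝ) ^ (n + 1))⁻¹ ⊆ Real.ofDigits '' cylinder ω n := by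
  refine Subset.trans ?_ (Icc_truncDigits_subset_image_cylinder (by omega) ω n)
  have hpos : (0 : ℝ) ≤ ((b : ℝ) ^ (n + 1))⁻¹ := by positivity
  have h₀' : (1 : ℝ) ≤ (ω n : ℕ) := mod_cast h₀
  have h₁' : ((ω n : ℕ) : ℝ) + 2 ≤ b := mod_cast h₁
  have hω := ofDigits_mem_Icc_truncDigits ω (n + 1)
  rw [truncDigits_succ] at hω
  rw [Real.ball_eq_Ioo, inv_pow_eq_mul_inv_pow_succ (ω 0).pos.ne' n]
  refine Ioo_subset_Icc_self.trans (Icc_subset_Icc ?_ ?_)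
  · linarith [hω.1, mul_le_mul_of_nonneg_right h₀' hpos]
  · linarith [hω.2, mul_le_mul_of_nonneg_right h₁' hpos]

end Digits

section Porosity

variable {X Y : Type*} [MetricSpace X] [MetricSpace Y]

lemma exists_closedBall_subset_of_lt_porSet {E : Set X} {x : X} {r s : ℝ} (hr : 0 < r)
    (h : s < porSet E x r * r) : ∃ y, closedBall y s ⊆ ball x r \ E := by
  have hzero : 0 ∈ {α : ℝ | 0 ≤ α ∧ ∃ y, ball y (α * r) ⊆ ball x r \ E} := ⟨le_rfl, x, by simp⟩
  obtain ⟨α, ⟨-, y, hy⟩, hα⟩ := exists_lt_of_lt_csSup ⟨0, hzero⟩ ((div_lt_iff₀ hr).2 h)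
  exact ⟨y, (closedBall_subset_ball ((div_lt_iff₀ hr).1 hα)).trans hy⟩

lemma porSet_preimage_isometryEquiv (f : X ≃ᵢ Y) (E : Set Y) (x : X) (r : ℝ) :
    porSet (f ⁻¹' E) x r = porSet E (f x) r := by
  unfold porSet
  congr! 4 with α
  refine f.toEquiv.exists_congr fun y => ?_
  rw [← f.isometry.preimage_ball, ← f.isometry.preimage_ball, ← preimage_sdiff]
  exact f.surjective.preimage_subset_preimage_iff

lemma IsMeanPorousSet.preimage_isometryEquiv {E : Set Y} {α ρ : ℝ} (h : IsMeanPorousSet E α ρ)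
    (f : X ≃ᵢ Y) : IsMeanPorousSet (f ⁻¹' E) α ρ := fun x hx => by
  simpa only [porSet_preimage_isometryEquiv] using h (f x) hx

-- The coercion of `Finset.range n` in `IsMeanPorousSet` is its image in `ℤ`.
lemma card_filter_cast_range (p : ℤ → Prop) [DecidablePred p] (n : ℕ) :
    (((Finset.range n) : Finset ℤ).filter p).card =
      ((Finset.range n).filter fun i : ℕ => p i).card := by
  have hcoe : ((Finset.range n) : Finset ℤ) = (Finset.range n).image (fun i : ℕ => (i : ℤ)) := by
    ext; simp [eq_comm]
  rw [hcoe, Finset.filter_image, Finset.card_image_of_injective _ Nat.cast_injective]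

lemma IsMeanPorousSet.eventually_mul_lt_card {E : Set X} {α ρ c : ℝ} (h : IsMeanPorousSet E α ρ)
    (hc : c < ρ) {x : X} (hx : x ∈ E) :
    ∀ᶠ n : ℕ in atTop, c * n <
      ((Finset.range n).filter fun i : ℕ => α ≤ porSet E x ((2 : ℝ) ^ (-(i : ℤ)))).card := by
  have hfreq := eventually_lt_of_lt_liminf (hc.trans_le (h x hx))
    (isBoundedUnder_of_eventually_ge (a := 0) (Eventually.of_forall fun n => by positivity))
  filter_upwards [hfreq, eventually_gt_atTop 0] with n hn hpos
  rwa [card_filter_cast_range, lt_div_iff₀ (by exact_mod_cast hpos)] at hn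

section Map

variable [MeasurableSpace X] [MeasurableSpace Y] [BorelSpace X] [BorelSpace Y]

lemma porMeas_map_isometryEquiv (f : X ≃ᵢ Y) (μ : Measure X) (x : X) (r ε : ℝ) :
    porMeas (μ.map f) (f x) r ε = porMeas μ x r ε := by
  have hball (y : X) (s : ℝ) : μ.map f (ball (f y) s) = μ (ball y s) := by
    rw [Measure.map_apply f.continuous.measurable measurableSet_ball, f.isometry.preimage_ball]
  unfold porMeas
  congr! 4 with α
  refine (f.toEquiv.exists_congr fun y => ?_).symm
  rw [← f.isometry.preimage_ball, ← f.isometry.preimage_ball,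
    f.surjective.preimage_subset_preimage_iff]
  simp only [IsometryEquiv.coe_toEquiv, f.isometry.preimage_ball, hball]

lemma porMeasPt_map_isometryEquiv (f : X ≃ᵢ Y) (μ : Measure X) (x : X) (ε : ℝ) :
    porMeasPt (μ.map f) (f x) ε = porMeasPt μ x ε := by
  simp only [porMeasPt, porMeas_map_isometryEquiv]

lemma porMeasure_map_isometryEquiv (f : X ≃ᵢ Y) (μ : Measure X) :
    porMeasure (μ.map f) = porMeasure μ := by
  have hae : map f (ae μ) = ae (μ.map f) := f.toHomeomorph.toMeasurableEquiv.map_ae μ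
  simp only [porMeasure, porMeasEps, essInf, ← hae, ← liminf_comp, Function.comp_def,
    porMeasPt_map_isometryEquiv]

end Map

section LowerBound

variable {V : Type*} [NormedAddCommGroup V] [NormedSpace ℝ V] [Nontrivial V]

lemma le_one_of_ball_mul_subset_ball {x y : V} {α r : ℝ} (hr : 0 < r) (hα : 0 ≤ α)
    (h : ball y (α * r) ⊆ ball x r) : α ≤ 1 := by
  have hdiam := diam_mono h isBounded_ball
  rw [diam_ball_eq y (by positivity), diam_ball_eq x hr.le] at hdiam
  nlinarith

variable [MeasurableSpace V] {μ : Measure V} {x y : V} {r s c ε : ℝ}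

lemma div_le_porMeas (hr : 0 < r) (hs : 0 ≤ s) (hsub : ball y s ⊆ ball x r)
    (hμ : μ (ball y s) ≤ ENNReal.ofReal ε * μ (ball x r)) : s / r ≤ porMeas μ x r ε := by
  refine le_csSup ⟨1, fun α ⟨hα, z, hz, _⟩ => le_one_of_ball_mul_subset_ball hr hα hz⟩
    ⟨by positivity, y, ?_⟩
  rw [div_mul_cancel₀ s hr.ne']
  exact ⟨hsub, hμ⟩

lemma eventually_porMeas_le_one : ∀ᶠ r in 𝓝[>] 0, porMeas μ x r ε ≤ 1 :=
  eventually_mem_nhdsWithin.mono fun _ hr => csSup_le ⟨0, le_rfl, x, by simp⟩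
    fun _ ⟨hα, _, hsub, _⟩ => le_one_of_ball_mul_subset_ball hr hα hsub

lemma porMeasPt_le_one : porMeasPt μ x ε ≤ 1 :=
  liminf_le_of_frequently_le eventually_porMeas_le_one.frequently
    (isBoundedUnder_of_eventually_ge (a := 0)
      (Eventually.of_forall fun _ => Real.sSup_nonneg fun _ h => h.1))

lemma le_porMeasPt (h : ∀ᶠ r in 𝓝[>] 0, c ≤ porMeas μ x r ε) : c ≤ porMeasPt μ x ε :=
  le_liminf_of_le (IsBoundedUnder.isCoboundedUnder_ge ⟨1, eventually_porMeas_le_one⟩) h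

lemma le_porMeasure [NeZero μ]
    (h : ∀ ε > 0, ∀ᵐ x ∂μ, ∀ᶠ r in 𝓝[>] 0, c ≤ porMeas μ x r ε) : c ≤ porMeasure μ := by
  refine le_csInf ⟨_, 1, mem_Ioi.2 one_pos, rfl⟩ ?_
  rintro _ ⟨ε, hε, rfl⟩
  exact le_liminf_of_le (IsBoundedUnder.isCoboundedUnder_ge
    ⟨1, eventually_map.2 (Eventually.of_forall fun _ => porMeasPt_le_one)⟩)
    ((h ε hε).mono fun _ => le_porMeasPt)

end LowerBound

end Porosity

section Visits

variable {Ω : Type*} {G : ℕ → Set Ω}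

lemma natCast_card_filter_mem (G : ℕ → Set Ω) (s : Finset ℕ) (ω : Ω) :
    ((s.filter fun n => ω ∈ G n).card : ℝ) = ∑ n ∈ s, (G n).indicator 1 ω := by
  simp only [Finset.natCast_card_filter, indicator_apply, Pi.one_apply]

variable [MeasurableSpace Ω] {μ : Measure Ω}

lemma tendsto_cesaro_measureReal_union {H : ℕ → Set Ω}
    (hG : Tendsto (fun N : ℕ => (N : ℝ)⁻¹ * ∑ n ∈ Finset.range N, μ.real (G n)) atTop (𝓝 0))
    (hH : Tendsto (fun N : ℕ => (N : ℝ)⁻¹ * ∑ n ∈ Finset.range N, μ.real (H n)) atTop (𝓝 0)) :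
    Tendsto (fun N : ℕ => (N : ℝ)⁻¹ * ∑ n ∈ Finset.range N, μ.real (G n ∪ H n)) atTop (𝓝 0) := by
  refine squeeze_zero (fun N => by positivity) (fun N => ?_) (add_zero (0 : ℝ) ▸ hG.add hH)
  rw [← mul_add, ← Finset.sum_add_distrib]
  gcongr
  exact measureReal_union_le _ _

variable [IsFiniteMeasure μ]

lemma integrable_card_filter_mem (hG : ∀ n, MeasurableSet (G n)) (s : Finset ℕ) :
    Integrable (fun ω => ((s.filter fun n => ω ∈ G n).card : ℝ)) μ := by
  simp only [natCast_card_filter_mem]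
  exact integrable_finsetSum s fun n _ => (integrable_const 1).indicator (hG n)

lemma integral_card_filter_mem (hG : ∀ n, MeasurableSet (G n)) (s : Finset ℕ) :
    ∫ ω, ((s.filter fun n => ω ∈ G n).card : ℝ) ∂μ = ∑ n ∈ s, μ.real (G n) := by
  simp only [natCast_card_filter_mem]
  rw [integral_finsetSum s fun n _ => (integrable_const 1).indicator (hG n)]
  exact Finset.sum_congr rfl fun n _ => integral_indicator_one (hG n)

lemma ae_frequently_card_filter_mem_lt (hG : ∀ n, MeasurableSet (G n))
    (h : Tendsto (fun N : ℕ => (N : ℝ)⁻¹ * ∑ n ∈ Finset.range N, μ.real (G n)) atTop (𝓝 0))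
    {c : ℝ} (hc : 0 < c) :
    ∀ᵐ ω ∂μ, ∃ᶠ N : ℕ in atTop, (((Finset.range N).filter fun n => ω ∈ G n).card : ℝ) < c * N := by
  let often (N : ℕ) : Set Ω := {ω | c * N ≤ ((Finset.range N).filter fun n => ω ∈ G n).card}
  have hnull (M : ℕ) : μ (⋂ N ≥ M, often N) = 0 := by
    have hlim : Tendsto (fun N : ℕ => c⁻¹ * ((N : ℝ)⁻¹ * ∑ n ∈ Finset.range N, μ.real (G n)))
        atTop (𝓝 0) := by simpa only [mul_zero] using h.const_mul c⁻¹
    rw [← measureReal_eq_zero_iff]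
    refine le_antisymm (ge_of_tendsto hlim ?_) measureReal_nonneg
    filter_upwards [eventually_ge_atTop M, eventually_gt_atTop 0] with N hM hN
    have markov : c * N * μ.real (often N) ≤ ∑ n ∈ Finset.range N, μ.real (G n) :=
      integral_card_filter_mem (μ := μ) hG _ ▸ mul_meas_ge_le_integral_of_nonneg
        (Eventually.of_forall fun ω => Nat.cast_nonneg _) (integrable_card_filter_mem hG _) _
    calc μ.real (⋂ N ≥ M, often N)
        ≤ μ.real (often N) := measureReal_mono (biInter_subset_of_mem hM)
      _ ≤ (c * N)⁻¹ * ∑ n ∈ Finset.range N, μ.real (G n) :=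
        (le_inv_mul_iff₀ (mul_pos hc (Nat.cast_pos.2 hN))).2 markov
      _ = c⁻¹ * ((N : ℝ)⁻¹ * ∑ n ∈ Finset.range N, μ.real (G n)) := by rw [mul_inv, mul_assoc]
  refine measure_mono_null (fun ω hω => ?_) (measure_iUnion_null hnull)
  have hω' : ∀ᶠ N : ℕ in atTop, ω ∈ often N :=
    (not_frequently.1 hω).mono fun N hN => not_lt.1 hN
  obtain ⟨M, hM⟩ := eventually_atTop.1 hω'
  exact mem_iUnion.2 ⟨M, mem_iInter₂.2 hM⟩

end Visits

section Cylinders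

variable {A : ℕ → Type*}

lemma preimage_prefix_eq_cylinder (ω : ∀ n, A n) (n : ℕ) :
    (fun (η : ∀ n, A n) (i : Fin n) => η i) ⁻¹' {fun i : Fin n => ω i} = cylinder ω n := by
  ext η
  simp only [mem_preimage, mem_singleton_iff, funext_iff, PiNat.mem_cylinder_iff, Fin.forall_iff]

variable [∀ n, MeasurableSpace (A n)] {ν : ∀ n, Measure (A n)} [∀ n, IsProbabilityMeasure (ν n)]

lemma tendsto_cesaro_measureReal_preimage_eval {B : ∀ n, Set (A n)}
    (hB : ∀ n, MeasurableSet (B n)) (h : Tendsto (fun n => (ν n).real (B n)) atTop (𝓝 0)) :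
    Tendsto (fun N : ℕ => (N : ℝ)⁻¹ *
      ∑ n ∈ Finset.range N, (Measure.infinitePi ν).real ((fun ω => ω n) ⁻¹' B n)) atTop (𝓝 0) := by
  have heval (n : ℕ) : (Measure.infinitePi ν).real ((fun ω => ω n) ⁻¹' B n) = (ν n).real (B n) :=
    (measurePreserving_eval_infinitePi ν n).measureReal_preimage (hB n).nullMeasurableSet
  simpa only [heval] using h.cesaro

variable [∀ n, MeasurableSingletonClass (A n)]

lemma measurableSet_of_cylinder_subset [∀ n, Countable (A n)] {S : Set (∀ n, A n)} {n : ℕ}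
    (hS : ∀ ω ∈ S, cylinder ω n ⊆ S) : MeasurableSet S := by
  let firstDigits (η : ∀ n, A n) (i : Fin n) := η i
  have hmeas : Measurable firstDigits := by fun_prop
  have hS' : firstDigits ⁻¹' (firstDigits '' S) = S := by
    refine (subset_preimage_image _ _).antisymm' ?_
    rintro η ⟨ω, hω, h⟩
    refine hS ω hω ?_
    rw [← preimage_prefix_eq_cylinder]
    exact h.symm
  rw [← hS']
  exact hmeas (to_countable _).measurableSet

lemma mul_measureReal_le_of_cylinder [∀ n, Finite (A n)] {μ : Measure (∀ n, A n)}
    [IsFiniteMeasure μ] {S T : Set (∀ n, A n)} {n : ℕ} {c : ℝ}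
    (hS : ∀ ω ∈ S, cylinder ω n ⊆ S)
    (h : ∀ ω ∈ S, c * μ.real (cylinder ω n) ≤ μ.real (cylinder ω n ∩ T)) :
    c * μ.real S ≤ μ.real T := by
  let firstDigits (η : ∀ n, A n) (i : Fin n) := η i
  have hmeas : Measurable firstDigits := by fun_prop
  have := Fintype.ofFinite (∀ i : Fin n, A i)
  have hsplit (U : Set (∀ n, A n)) : μ.real U = ∑ w, μ.real (firstDigits ⁻¹' {w} ∩ U) := by
    have hpre w : MeasurableSet (firstDigits ⁻¹' {w}) := hmeas (measurableSet_singleton w)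
    have := sum_measureReal_preimage_singleton (μ := μ.restrict U) Finset.univ fun w _ => hpre w
    simpa only [measureReal_restrict_apply (hpre _), Finset.coe_univ, preimage_univ,
      measureReal_restrict_apply_univ] using this.symm
  rw [hsplit S, hsplit T, Finset.mul_sum]
  refine Finset.sum_le_sum fun w _ => ?_
  rcases (firstDigits ⁻¹' {w} ∩ S).eq_empty_or_nonempty with hempty | ⟨ω, rfl, hω⟩
  · simp [hempty]
  · rw [show firstDigits ⁻¹' {firstDigits ω} = cylinder ω n from preimage_prefix_eq_cylinder ω n,
      inter_eq_left.2 (hS ω hω)]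
    exact h ω hω

lemma measure_infinitePi_cylinder (ω : ∀ n, A n) (n : ℕ) :
    Measure.infinitePi ν (cylinder ω n) = ∏ i ∈ Finset.range n, ν i {ω i} := by
  rw [PiNat.cylinder_eq_pi, Measure.infinitePi_pi ν fun i _ => measurableSet_singleton _]

lemma measureReal_infinitePi_cylinder (ω : ∀ n, A n) (n : ℕ) :
    (Measure.infinitePi ν).real (cylinder ω n) = ∏ i ∈ Finset.range n, (ν i).real {ω i} := by
  simp only [measureReal_def, measure_infinitePi_cylinder, ENNReal.toReal_prod]

lemma measure_infinitePi_cylinder_update (ω : ∀ n, A n) (n : ℕ) (a : A n) :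
    Measure.infinitePi ν (cylinder (Function.update ω n a) (n + 1)) =
      ν n {a} * Measure.infinitePi ν (cylinder ω n) := by
  rw [measure_infinitePi_cylinder, Finset.prod_range_succ, Function.update_self, mul_comm,
    ← measure_infinitePi_cylinder,
    PiNat.mem_cylinder_iff_eq.1 (PiNat.update_mem_cylinder ω n a)]

lemma pow_mul_measureReal_cylinder_le {ω ζ : ∀ n, A n} {n k : ℕ} {δ : ℝ} (hδ : 0 ≤ δ)
    (hν : ∀ i < n + k, ∀ a, δ ≤ (ν i).real {a}) (hζ : ζ ∈ cylinder ω n) :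
    δ ^ k * (Measure.infinitePi ν).real (cylinder ω n) ≤
      (Measure.infinitePi ν).real (cylinder ζ (n + k)) := by
  rw [← PiNat.mem_cylinder_iff_eq.1 hζ, measureReal_infinitePi_cylinder,
    measureReal_infinitePi_cylinder, Finset.prod_range_add, mul_comm]
  gcongr
  simpa using Finset.prod_le_prod (s := Finset.range k) (fun _ _ => hδ)
    fun i hi => hν (n + i) (by simpa using hi) (ζ (n + i))

end Cylinders

section SymbolicPorosity

variable {A : ℕ → Type*} {F : Set (∀ n, A n)} {k n N : ℕ}

/-- The union of the holes of `F` at level `n` with depth `k`, a hole being a cylinder of length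
`n + k` which misses `F` although its parent cylinder of length `n` meets `F`. -/
def symbolicHole (F : Set (∀ n, A n)) (k n : ℕ) : Set (∀ n, A n) :=
  {ω | (cylinder ω n ∩ F).Nonempty ∧ Disjoint (cylinder ω (n + k)) F}

/-- The sequences at which `F` is porous at level `n` with depth `k`, the analogue for cylinders of
a lower bound on `porSet`: the cylinder of length `n` around the sequence contains a hole. -/
def symbolicPorous (F : Set (∀ n, A n)) (k n : ℕ) : Set (∀ n, A n) :=
  {ω | (cylinder ω n ∩ symbolicHole F k n).Nonempty}

lemma cylinder_subset_symbolicPorous {ω : ∀ n, A n} (hω : ω ∈ symbolicPorous F k n) :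
    cylinder ω n ⊆ symbolicPorous F k n := fun η hη => by
  rwa [symbolicPorous, mem_ofPred_eq, PiNat.mem_cylinder_iff_eq.1 hη]

lemma cylinder_subset_symbolicHole {ω : ∀ n, A n} (hω : ω ∈ symbolicHole F k n) :
    cylinder ω (n + k) ⊆ symbolicHole F k n := fun η hη => by
  rwa [symbolicHole, mem_ofPred_eq, PiNat.mem_cylinder_iff_eq.1 hη,
    PiNat.mem_cylinder_iff_eq.1 (PiNat.cylinder_anti ω (Nat.le_add_right n k) hη)]

-- If `ω` lies in holes at levels `m` and `n ≥ m + k`, then its cylinder of length `m + k` both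
-- misses `F` and contains its cylinder of length `n`, which meets `F`.
lemma card_filter_mem_symbolicHole_le (F : Set (∀ n, A n)) (k N : ℕ) (ω : ∀ n, A n) :
    ((Finset.range N).filter fun n => ω ∈ symbolicHole F k n).card ≤ k := by
  set levels := (Finset.range N).filter fun n => ω ∈ symbolicHole F k n
  rcases levels.eq_empty_or_nonempty with hempty | hne
  · simp [hempty]
  have hmem {n : ℕ} (hn : n ∈ levels) : ω ∈ symbolicHole F k n := (Finset.mem_filter.1 hn).2
  have hsub : levels ⊆ Finset.Ico (levels.min' hne) (levels.min' hne + k) := fun n hn => by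
    refine Finset.mem_Ico.2 ⟨levels.min'_le n hn, lt_of_not_ge fun hle => ?_⟩
    obtain ⟨η, hη, hηF⟩ := (hmem hn).1
    exact disjoint_left.1 (hmem (levels.min'_mem hne)).2 (PiNat.cylinder_anti ω hle hη) hηF
  simpa using Finset.card_le_card hsub

variable [∀ n, Finite (A n)] [∀ n, MeasurableSpace (A n)] [∀ n, MeasurableSingletonClass (A n)]
  {ν : ∀ n, Measure (A n)} [∀ n, IsProbabilityMeasure (ν n)]

lemma measurableSet_symbolicPorous (F : Set (∀ n, A n)) (k n : ℕ) :
    MeasurableSet (symbolicPorous F k n) :=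
  measurableSet_of_cylinder_subset fun _ => cylinder_subset_symbolicPorous

lemma measurableSet_symbolicHole (F : Set (∀ n, A n)) (k n : ℕ) :
    MeasurableSet (symbolicHole F k n) :=
  measurableSet_of_cylinder_subset fun _ => cylinder_subset_symbolicHole

lemma pow_mul_measureReal_symbolicPorous_le {δ : ℝ} (hδ : 0 ≤ δ)
    (hν : ∀ i < n + k, ∀ a, δ ≤ (ν i).real {a}) :
    δ ^ k * (Measure.infinitePi ν).real (symbolicPorous F k n) ≤
      (Measure.infinitePi ν).real (symbolicHole F k n) := by
  refine mul_measureReal_le_of_cylinder (fun _ => cylinder_subset_symbolicPorous) ?_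
  rintro ω ⟨ζ, hζω, hζ⟩
  have hsub : cylinder ζ (n + k) ⊆ cylinder ω n ∩ symbolicHole F k n := by
    refine subset_inter ?_ (cylinder_subset_symbolicHole hζ)
    rw [← PiNat.mem_cylinder_iff_eq.1 hζω]
    exact PiNat.cylinder_anti ζ (Nat.le_add_right n k)
  exact (pow_mul_measureReal_cylinder_le hδ hν hζω).trans (measureReal_mono hsub)

lemma pow_mul_sum_measureReal_symbolicPorous_le {δ : ℝ} (hδ : 0 ≤ δ)
    (hν : ∀ i < N + k, ∀ a, δ ≤ (ν i).real {a}) :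
    δ ^ k * ∑ n ∈ Finset.range N, (Measure.infinitePi ν).real (symbolicPorous F k n) ≤ k := by
  have hmeas := measurableSet_symbolicHole F k
  calc δ ^ k * ∑ n ∈ Finset.range N, (Measure.infinitePi ν).real (symbolicPorous F k n)
      ≤ ∑ n ∈ Finset.range N, (Measure.infinitePi ν).real (symbolicHole F k n) := by
        rw [Finset.mul_sum]
        refine Finset.sum_le_sum fun n hn => pow_mul_measureReal_symbolicPorous_le hδ fun i hi => ?_
        exact hν i (hi.trans (Nat.add_lt_add_right (Finset.mem_range.1 hn) k))
    _ = ∫ ω, (((Finset.range N).filter fun n => ω ∈ symbolicHole F k n).card : ℝ)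
          ∂Measure.infinitePi ν := (integral_card_filter_mem hmeas _).symm
    _ ≤ ∫ _, (k : ℝ) ∂Measure.infinitePi ν :=
        integral_mono (integrable_card_filter_mem hmeas _) (integrable_const _)
          fun ω => Nat.cast_le.2 (card_filter_mem_symbolicHole_le F k N ω)
    _ = k := by simp

lemma tendsto_cesaro_measureReal_symbolicPorous {δ : ℕ → ℝ} (hδ : ∀ N, 0 < δ N)
    (hν : ∀ N, ∀ i < N, ∀ a, δ N ≤ (ν i).real {a})
    (hlim : Tendsto (fun N : ℕ => (N * δ (N + k) ^ k)⁻¹) atTop (𝓝 0)) (F : Set (∀ n, A n)) :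
    Tendsto (fun N : ℕ => (N : ℝ)⁻¹ *
      ∑ n ∈ Finset.range N, (Measure.infinitePi ν).real (symbolicPorous F k n)) atTop (𝓝 0) := by
  refine squeeze_zero (fun N => by positivity) (fun N => ?_)
    (by simpa only [zero_mul] using hlim.mul_const (k : ℝ))
  rw [mul_inv, mul_assoc]
  gcongr
  exact (le_inv_mul_iff₀ (pow_pos (hδ _) k)).2
    (pow_mul_sum_measureReal_symbolicPorous_le (hδ _).le (hν (N + k)))

end SymbolicPorosity

section DigitMeasure

variable {b : ℕ} (ν : ℕ → Measure (Fin b))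

/-- The law of a random number whose digits in base `b` are independent, the `n`-th digit having
law `ν n`. -/
noncomputable def digitMeasure : Measure ℝ := (Measure.infinitePi ν).map Real.ofDigits

lemma digitMeasure_apply {E : Set ℝ} (hE : MeasurableSet E) :
    digitMeasure ν E = Measure.infinitePi ν (Real.ofDigits ⁻¹' E) :=
  Measure.map_apply Real.continuous_ofDigits.measurable hE

lemma ae_digitMeasure_mem_range : ∀ᵐ x ∂digitMeasure ν, x ∈ range (@Real.ofDigits b) :=
  ae_map_mem_range _ (isCompact_range Real.continuous_ofDigits).measurableSet _

variable {ω : ℕ → Fin b} {n : ℕ} {r ε : ℝ}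

lemma measure_cylinder_le_digitMeasure_ball (h : ((b : ℝ) ^ n)⁻¹ < r) :
    Measure.infinitePi ν (cylinder ω n) ≤ digitMeasure ν (ball (Real.ofDigits ω) r) := by
  rw [digitMeasure_apply ν measurableSet_ball]
  exact measure_mono fun η hη => mem_ball.2 ((Real.abs_ofDigits_sub_ofDigits_le hη).trans_lt h)

lemma digitMeasure_Ioo_truncDigits_le (ω : ℕ → Fin b) (n : ℕ) :
    digitMeasure ν (Ioo (truncDigits ω n) (truncDigits ω n + ((b : ℝ) ^ n)⁻¹)) ≤
      Measure.infinitePi ν (cylinder ω n) := by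
  rw [digitMeasure_apply ν measurableSet_Ioo]
  exact measure_mono fun η => mem_cylinder_of_ofDigits_mem_Ioo

variable [∀ n, IsProbabilityMeasure (ν n)]

instance isProbabilityMeasure_digitMeasure : IsProbabilityMeasure (digitMeasure ν) :=
  Measure.isProbabilityMeasure_map Real.continuous_ofDigits.aemeasurable

-- The hole consists of the numbers which share the first `n + 1` digits of `ω` and have `a` as the
-- next one.
lemma inv_le_porMeas_digitMeasure (ω : ℕ → Fin b) {a : Fin b}
    (hr : r ∈ Ioc ((b : ℝ) ^ (n + 1))⁻¹ ((b : ℝ) ^ n)⁻¹)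
    (ha : (ν (n + 1)).real {a} ≤ ε) :
    (2 * (b : ℝ) ^ 2)⁻¹ ≤ porMeas (digitMeasure ν) (Real.ofDigits ω) r ε := by
  have hb : (0 : ℝ) < b := mod_cast a.pos
  have hr₀ : 0 < r := lt_trans (by positivity) hr.1
  let ζ := Function.update ω (n + 1) a
  let s : ℝ := ((b : ℝ) ^ (n + 2))⁻¹ / 2
  have hhole : ball (truncDigits ζ (n + 2) + s) s =
      Ioo (truncDigits ζ (n + 2)) (truncDigits ζ (n + 2) + ((b : ℝ) ^ (n + 2))⁻¹) := by
    rw [Real.ball_eq_Ioo]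
    congr 1 <;> ring
  have htrunc : truncDigits ζ (n + 1) = truncDigits ω (n + 1) :=
    truncDigits_eq_of_mem_cylinder (PiNat.update_mem_cylinder ω (n + 1) a)
  have hω := ofDigits_mem_Icc_truncDigits ω (n + 1)
  have hsub : ball (truncDigits ζ (n + 2) + s) s ⊆ ball (Real.ofDigits ω) r := by
    rw [hhole, Real.ball_eq_Ioo]
    refine (Ioo_truncDigits_succ_subset ζ (n + 1)).trans (Ioo_subset_Ioo ?_ ?_) <;> rw [htrunc]
    · linarith [hr.1, hω.2]
    · linarith [hr.1, hω.1]
  have hmeas : digitMeasure ν (ball (truncDigits ζ (n + 2) + s) s) ≤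
      ENNReal.ofReal ε * digitMeasure ν (ball (Real.ofDigits ω) r) := by
    rw [hhole]
    calc digitMeasure ν (Ioo (truncDigits ζ (n + 2)) _)
        ≤ Measure.infinitePi ν (cylinder ζ (n + 2)) := digitMeasure_Ioo_truncDigits_le ν ζ (n + 2)
      _ = ν (n + 1) {a} * Measure.infinitePi ν (cylinder ω (n + 1)) :=
        measure_infinitePi_cylinder_update ω (n + 1) a
      _ ≤ _ := mul_le_mul' (ENNReal.le_ofReal_iff_toReal_le (by finiteness)
        (measureReal_nonneg.trans ha) |>.2 ha) (measure_cylinder_le_digitMeasure_ball ν hr.1)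
  calc (2 * (b : ℝ) ^ 2)⁻¹ = s / ((b : ℝ) ^ n)⁻¹ := by simp only [s]; field_simp; ring
    _ ≤ s / r := div_le_div_of_nonneg_left (by positivity) hr₀ hr.2
    _ ≤ _ := div_le_porMeas hr₀ (by positivity) hsub hmeas

lemma inv_le_porMeasure_digitMeasure (hb : 1 < b) {a : Fin b}
    (ha : Tendsto (fun n => (ν n).real {a}) atTop (𝓝 0)) :
    (2 * (b : ℝ) ^ 2)⁻¹ ≤ porMeasure (digitMeasure ν) := by
  have hb' : (1 : ℝ) < b := mod_cast hb
  refine le_porMeasure fun ε hε => (ae_digitMeasure_mem_range ν).mono ?_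
  rintro _ ⟨ω, rfl⟩
  obtain ⟨M, hM⟩ := eventually_atTop.1 (ha.eventually_le_const hε)
  filter_upwards [Ioc_mem_nhdsGT (show (0 : ℝ) < (b : ℝ)⁻¹ ^ M by positivity)] with r hr
  obtain ⟨n, hn, hn'⟩ := exists_nat_pow_near_of_lt_one hr.1
    (hr.2.trans (pow_le_one₀ (by positivity) (inv_le_one_of_one_le₀ hb'.le)))
    (show 0 < (b : ℝ)⁻¹ by positivity) (inv_lt_one_of_one_lt₀ hb')
  have hMn : M < n + 1 := (pow_lt_pow_iff_right_of_lt_one₀ (by positivity)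
    (inv_lt_one_of_one_lt₀ hb')).1 (hn.trans_le hr.2)
  rw [inv_pow] at hn hn'
  exact inv_le_porMeas_digitMeasure ν ω ⟨hn, hn'⟩ (hM _ hMn.le)

end DigitMeasure

section DyadicScales

lemma card_filter_range_le_two_mul {p q : ℕ → Prop} [DecidablePred p] [DecidablePred q]
    (h : ∀ i ≥ 2, p i → q (i / 2 - 1)) (N : ℕ) :
    ((Finset.range N).filter p).card ≤ 2 * (((Finset.range N).filter q).card + 1) := by
  let T : Finset ℕ := insert 0 (((Finset.range N).filter q).image (· + 1))
  have hmaps : ∀ i ∈ (Finset.range N).filter p, i / 2 ∈ T := by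
    intro i hi
    rw [Finset.mem_filter, Finset.mem_range] at hi
    rcases lt_or_ge i 2 with hi₂ | hi₂
    · exact Finset.mem_insert.2 (Or.inl (by omega))
    · refine Finset.mem_insert_of_mem (Finset.mem_image.2 ⟨i / 2 - 1, ?_, by omega⟩)
      exact Finset.mem_filter.2 ⟨Finset.mem_range.2 (by omega), h i hi₂ hi.2⟩
  have hfiber : ∀ m ∈ T, (((Finset.range N).filter p).filter (· / 2 = m)).card ≤ 2 := by
    intro m _
    have hsub : ((Finset.range N).filter p).filter (· / 2 = m) ⊆ {2 * m, 2 * m + 1} := by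
      intro i hi
      have := (Finset.mem_filter.1 hi).2
      simp only [Finset.mem_insert, Finset.mem_singleton]
      omega
    exact (Finset.card_le_card hsub).trans Finset.card_le_two
  calc ((Finset.range N).filter p).card ≤ 2 * T.card :=
        Finset.card_le_mul_card_image_of_maps_to hmaps 2 hfiber
    _ ≤ 2 * (((Finset.range N).filter q).card + 1) :=
        Nat.mul_le_mul_left 2 ((Finset.card_insert_le _ _).trans
          (Nat.add_le_add_right Finset.card_image_le 1))

lemma IsMeanPorousSet.eventually_mul_lt_card_of_imp {X : Type*} [MetricSpace X] {E : Set X}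
    {α ρ : ℝ} (h : IsMeanPorousSet E α ρ) (hρ : 0 < ρ) {x : X} (hx : x ∈ E) {q : ℕ → Prop}
    (hq : ∀ i : ℕ, 2 ≤ i → α ≤ porSet E x (2 ^ (-(i : ℤ))) → q (i / 2 - 1)) :
    ∀ᶠ N : ℕ in atTop, ρ / 8 * N < ((Finset.range N).filter q).card := by
  filter_upwards [h.eventually_mul_lt_card (half_lt_self hρ) hx,
    eventually_gt_atTop ⌈8 / ρ⌉₊] with N hmany hN
  have hcard := (Nat.cast_le (α := ℝ)).2 (card_filter_range_le_two_mul hq N)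
  push_cast at hcard
  have hlarge : 8 < N * ρ := (div_lt_iff₀ hρ).1 (Nat.lt_of_ceil_lt hN)
  linarith

end DyadicScales

section MeanPorous

variable {b : ℕ} {E : Set ℝ} {ω : ℕ → Fin b} {n k : ℕ} {r : ℝ}

lemma mem_symbolicPorous_of_lt_porSet (hω : Real.ofDigits ω ∈ E) (h₀ : 0 < (ω n : ℕ))
    (h₁ : (ω n : ℕ) + 1 < b) (hr : r ∈ Ioc 0 ((b : ℝ) ^ (n + 1))⁻¹)
    (h : ((b : ℝ) ^ (n + k))⁻¹ < porSet E (Real.ofDigits ω) r * r) :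
    ω ∈ symbolicPorous (Real.ofDigits ⁻¹' E) k n := by
  have hb : (0 : ℝ) < b := mod_cast (ω 0).pos
  obtain ⟨y, hy⟩ := exists_closedBall_subset_of_lt_porSet hr.1 h
  obtain ⟨ζ, hζ, rfl⟩ : y ∈ Real.ofDigits '' cylinder ω n :=
    ball_ofDigits_subset_image_cylinder h₀ h₁ <| ball_subset_ball hr.2
      (hy (mem_closedBall_self (by positivity))).1
  refine ⟨ζ, hζ, ⟨ω, PiNat.mem_cylinder_comm .. |>.1 hζ, hω⟩, disjoint_left.2 fun η hη => ?_⟩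
  exact (hy (mem_closedBall.2 (Real.abs_ofDigits_sub_ofDigits_le hη))).2

-- The scales `2⁻ⁱ` with `i = 2 * n + 2` or `i = 2 * n + 3` correspond to the digit `n` in base `4`.
lemma mem_symbolicPorous_of_le_porSet {ω : ℕ → Fin 4} {α : ℝ} (hω : Real.ofDigits ω ∈ E)
    (h₀ : 0 < (ω n : ℕ)) (h₁ : (ω n : ℕ) + 1 < 4) (hα : ((4 : ℝ) ^ k)⁻¹ < α / 8) {i : ℕ}
    (hi : 2 ≤ i) (hn : i / 2 - 1 = n) (h : α ≤ porSet E (Real.ofDigits ω) (2 ^ (-(i : ℤ)))) :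
    ω ∈ symbolicPorous (Real.ofDigits ⁻¹' E) k n := by
  have hscale : (2 : ℝ) ^ (-(i : ℤ)) ∈ Icc (((4 : ℝ) ^ n)⁻¹ / 8) (((4 : ℝ) ^ (n + 1))⁻¹) := by
    have h4 (m : ℕ) : (4 : ℝ) ^ m = 2 ^ (2 * m) := by rw [pow_mul]; norm_num
    have h8 : ((4 : ℝ) ^ n)⁻¹ / 8 = (2 ^ (2 * n + 3))⁻¹ := by rw [h4, pow_add]; field_simp; norm_num
    rw [h8, h4, zpow_neg, zpow_natCast]
    constructor <;> gcongr <;> first | norm_num; done | omega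
  refine mem_symbolicPorous_of_lt_porSet hω h₀ h₁ ⟨by positivity, mod_cast hscale.2⟩ ?_
  calc (((4 : ℕ) : ℝ) ^ (n + k))⁻¹ = ((4 : ℝ) ^ k)⁻¹ * ((4 : ℝ) ^ n)⁻¹ := by
        rw [pow_add, mul_inv_rev, Nat.cast_ofNat]
    _ < α / 8 * ((4 : ℝ) ^ n)⁻¹ := by gcongr
    _ = α * (((4 : ℝ) ^ n)⁻¹ / 8) := by ring
    _ ≤ _ := mul_le_mul h hscale.1 (by positivity)
      (by linarith [hα, show (0 : ℝ) < (4 ^ k)⁻¹ by positivity])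

variable {ν : ℕ → Measure (Fin 4)} [∀ n, IsProbabilityMeasure (ν n)] {c : Fin 4} {δ : ℕ → ℝ}

theorem IsMeanPorousSet.measure_preimage_ofDigits_eq_zero {α ρ : ℝ} (h : IsMeanPorousSet E α ρ)
    (hα : 0 < α) (hρ : 0 < ρ) (hc₀ : 0 < (c : ℕ)) (hc₁ : (c : ℕ) + 1 < 4)
    (hc : Tendsto (fun n => (ν n).real {c}ᶜ) atTop (𝓝 0))
    (hδ : ∀ N, 0 < δ N) (hν : ∀ N, ∀ i < N, ∀ a, δ N ≤ (ν i).real {a})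
    (hlim : ∀ k, Tendsto (fun N : ℕ => (N * δ (N + k) ^ k)⁻¹) atTop (𝓝 0)) :
    Measure.infinitePi ν (Real.ofDigits ⁻¹' E) = 0 := by
  obtain ⟨k, hk⟩ := exists_pow_lt_of_lt_one (show 0 < α / 8 by positivity)
    (show (4 : ℝ)⁻¹ < 1 by norm_num)
  rw [inv_pow] at hk
  let F : Set (ℕ → Fin 4) := Real.ofDigits ⁻¹' E
  let G (n : ℕ) : Set (ℕ → Fin 4) := (fun ω => ω n) ⁻¹' {c}ᶜ ∪ symbolicPorous F k n
  have hG (n : ℕ) : MeasurableSet (G n) :=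
    (measurable_pi_apply n (measurableSet_singleton c).compl).union
      (measurableSet_symbolicPorous F k n)
  have hcesaro := tendsto_cesaro_measureReal_union
    (tendsto_cesaro_measureReal_preimage_eval (fun _ => (measurableSet_singleton c).compl) hc)
    (tendsto_cesaro_measureReal_symbolicPorous hδ hν (hlim k) F)
  refine measure_eq_zero_iff_ae_notMem.2 ?_
  filter_upwards [ae_frequently_card_filter_mem_lt hG hcesaro (show 0 < ρ / 8 by positivity)]
    with ω hfew hω
  have hmany := h.eventually_mul_lt_card_of_imp hρ hω (q := fun n => ω ∈ G n) fun i hi hpor => by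
    by_cases hdigit : ω (i / 2 - 1) = c
    · exact Or.inr
        (mem_symbolicPorous_of_le_porSet hω (hdigit ▸ hc₀) (hdigit ▸ hc₁) hk hi rfl hpor)
    · exact Or.inl hdigit
  obtain ⟨N, hlt, hgt⟩ := (hfew.and_eventually hmany).exists
  exact lt_asymm hlt hgt

end MeanPorous

section DigitLaws

open ProbabilityTheory unitInterval

/-- The law of a letter which is `c` with probability `1 - p` and uniformly distributed with
probability `p`. -/
noncomputable def noisyDirac {A : Type*} [MeasurableSpace A] (c : A) (p : unitInterval) :
    Measure A :=
  toNNReal p • uniformOn univ + toNNReal (σ p) • Measure.dirac c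

section NoisyDirac

variable {A : Type*} [MeasurableSpace A] (c : A) (p : unitInterval)

lemma noisyDirac_real (s : Set A) :
    (noisyDirac c p).real s =
      p * (uniformOn univ).real s + (1 - p) * (Measure.dirac c).real s := by
  rw [noisyDirac, measureReal_add_apply, measureReal_nnreal_smul_apply,
    measureReal_nnreal_smul_apply]
  rfl

variable [MeasurableSingletonClass A]

lemma noisyDirac_real_compl_singleton_le : (noisyDirac c p).real {c}ᶜ ≤ p := by
  have hdirac : (Measure.dirac c).real {c}ᶜ = 0 := by simp [measureReal_def]
  rw [noisyDirac_real, hdirac, mul_zero, add_zero]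
  exact mul_le_of_le_one_right (nonneg p) measureReal_le_one

variable [Finite A]

lemma uniformOn_univ_real_singleton (a : A) :
    (uniformOn univ).real {a} = (Nat.card A : ℝ)⁻¹ := by
  have := Fintype.ofFinite A
  simp [measureReal_def, uniformOn_univ]

instance isProbabilityMeasure_noisyDirac : IsProbabilityMeasure (noisyDirac c p) :=
  have : IsProbabilityMeasure (uniformOn (univ : Set A)) :=
    isProbabilityMeasure_uniformOn finite_univ ⟨c, mem_univ c⟩
  inferInstanceAs (IsProbabilityMeasure (toNNReal p • _ + toNNReal (σ p) • _))

lemma div_card_le_noisyDirac_real_singleton (a : A) :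
    (p : ℝ) / Nat.card A ≤ (noisyDirac c p).real {a} := by
  rw [noisyDirac_real, uniformOn_univ_real_singleton, ← div_eq_mul_inv]
  exact le_add_of_nonneg_right (mul_nonneg (one_minus_nonneg p) measureReal_nonneg)

end NoisyDirac

lemma one_le_log_add_exp_one (n : ℕ) : 1 ≤ Real.log (n + Real.exp 1) :=
  (Real.le_log_iff_exp_le (by positivity)).2 (le_add_of_nonneg_left n.cast_nonneg)

/-- The probability that the `n`-th digit of the random number is uniformly distributed. The shift
by `exp 1` makes the logarithm at least `1`. -/
noncomputable def digitNoise (n : ℕ) : unitInterval :=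
  ⟨(Real.log (n + Real.exp 1))⁻¹, inv_nonneg.2 (zero_le_one.trans (one_le_log_add_exp_one n)),
    inv_le_one_of_one_le₀ (one_le_log_add_exp_one n)⟩

lemma coe_digitNoise (n : ℕ) : (digitNoise n : ℝ) = (Real.log (n + Real.exp 1))⁻¹ := rfl

lemma digitNoise_antitone : Antitone digitNoise := fun m n h => by
  have hlog := one_le_log_add_exp_one m
  rw [← Subtype.coe_le_coe, coe_digitNoise, coe_digitNoise]
  gcongr

lemma digitNoise_pos (n : ℕ) : (0 : ℝ) < digitNoise n :=
  inv_pos.2 (zero_lt_one.trans_le (one_le_log_add_exp_one n))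

lemma tendsto_digitNoise : Tendsto (fun n => (digitNoise n : ℝ)) atTop (𝓝 0) :=
  tendsto_inv_atTop_zero.comp <| Real.tendsto_log_atTop.comp <|
    tendsto_atTop_add_const_right _ _ tendsto_natCast_atTop_atTop

lemma tendsto_inv_mul_digitNoise_div_pow (b : ℝ) (k : ℕ) :
    Tendsto (fun N : ℕ => (N * (digitNoise (N + k) / b : ℝ) ^ k)⁻¹) atTop (𝓝 0) := by
  have hshift : Tendsto (fun N : ℕ => (N + (k + Real.exp 1) : ℝ)) atTop atTop :=
    tendsto_atTop_add_const_right _ _ tendsto_natCast_atTop_atTop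
  have hN : Tendsto (norm ∘ fun N : ℕ => (N : ℝ)) atTop atTop :=
    tendsto_norm_atTop_atTop.comp tendsto_natCast_atTop_atTop
  have hO : (fun N : ℕ => (N + (k + Real.exp 1) : ℝ)) =O[atTop] fun N : ℕ => (N : ℝ) :=
    (Asymptotics.isBigO_refl _ _).add
      (Asymptotics.isLittleO_const_left.2 (Or.inr hN)).isBigO
  have hlog := ((Real.isLittleO_pow_log_id_atTop (n := k)).comp_tendsto hshift).trans_isBigO hO
  have hlim := hlog.tendsto_div_nhds_zero.const_mul (b ^ k)
  rw [mul_zero] at hlim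
  refine hlim.congr fun N => ?_
  simp only [Function.comp_def, coe_digitNoise]
  push_cast
  rw [add_assoc, mul_inv, div_pow, inv_pow, inv_div, div_inv_eq_mul]
  ring

lemma div_card_digitNoise_le_noisyDirac_real_singleton {A : Type*} [Finite A] [MeasurableSpace A]
    [MeasurableSingletonClass A] (c : A) {m n : ℕ} (h : m ≤ n) (a : A) :
    (digitNoise n : ℝ) / Nat.card A ≤ (noisyDirac c (digitNoise m)).real {a} :=
  (div_le_div_of_nonneg_right (Subtype.coe_le_coe.2 (digitNoise_antitone h))
    (Nat.cast_nonneg _)).trans (div_card_le_noisyDirac_real_singleton c (digitNoise m) a)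

end DigitLaws

/-- There exist a dimension `d` and a Borel probability measure `μ` on
`ℝ^d` with positive porosity which gives zero mass to every mean porous Borel set. -/
theorem stmt16 :
    ∃ (d : ℕ) (μ : Measure (EuclideanSpace ℝ (Fin d))), 0 < d ∧
      IsProbabilityMeasure μ ∧ 0 < porMeasure μ ∧
      ∀ E : Set (EuclideanSpace ℝ (Fin d)), MeasurableSet E →
        (∃ α ρ : ℝ, 0 < α ∧ 0 < ρ ∧ IsMeanPorousSet E α ρ) → μ E = 0 := by
  let ν (n : ℕ) : Measure (Fin 4) := noisyDirac 1 (digitNoise n)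
  let f : ℝ ≃ᵢ EuclideanSpace ℝ (Fin 1) :=
    (OrthonormalBasis.singleton (Fin 1) ℝ).repr.toIsometryEquiv
  have hf : Measurable f := f.continuous.measurable
  have hone : Tendsto (fun n => (ν n).real {1}ᶜ) atTop (𝓝 0) :=
    squeeze_zero (fun _ => measureReal_nonneg)
      (fun n => noisyDirac_real_compl_singleton_le 1 (digitNoise n)) tendsto_digitNoise
  have hzero : Tendsto (fun n => (ν n).real {0}) atTop (𝓝 0) :=
    squeeze_zero (fun _ => measureReal_nonneg) (fun n => measureReal_mono (by simp)) hone
  refine ⟨1, (digitMeasure ν).map f, one_pos, Measure.isProbabilityMeasure_map hf.aemeasurable,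
    ?_, ?_⟩
  · rw [porMeasure_map_isometryEquiv]
    exact lt_of_lt_of_le (by norm_num) (inv_le_porMeasure_digitMeasure ν (by norm_num) hzero)
  · rintro E hE ⟨α, ρ, hα, hρ, hpor⟩
    rw [Measure.map_apply hf hE, digitMeasure_apply ν (hf hE)]
    exact (hpor.preimage_isometryEquiv f).measure_preimage_ofDigits_eq_zero hα hρ
      (by decide) (by decide) hone (fun N => div_pos (digitNoise_pos N) (by simp))
      (fun N i hi => div_card_digitNoise_le_noisyDirac_real_singleton 1 hi.le)
      (tendsto_inv_mul_digitNoise_div_pow _)
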